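/- arXiv:2004.06351 — 3 statements merged into one kernel-verified Lean document; each statement's English description precedes it below -/
import Mathlib

section
/- Let G : ℝ³ → Matrix 2 2 ℂ be smooth with G(x) ∈ SU(2) for all x and G(0) = I, and define the frame e_j^α(x) := (1/2)·tr( s_j · G(x)* · s^α · G(x) ) (this is the rotation of the standard constant frame by G). Define the flat Weitzenböck coefficients Υ^α_{βγ}(x) := Σ_j e_j^α(x)·∂e_j^γ/∂x^β(x), torsion T^α_{βγ} := Υ^α_{βγ} − Υ^α_{γβ}, contorsion K_{αβγ} := (1/2)(T_{αβγ} + T_{βαγ} + T_{γαβ}), and dual *K_{αβ}(x) := (1/2)·Σ_{μ,ν} K_{μαν}(x)·ε_{μνβ}. Then for all α, β ∈ {1,2,3}: ∂²G/∂x^α∂x^β(0) = −(i/4)·Σ_μ ( ∂(*K_{βμ})/∂x^α(0) + ∂(*K_{αμ})/∂x^β(0) )·s^μ − (1/4)·( Σ_μ *K_{αμ}(0)·*K_{βμ}(0) )·I. -/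
open Matrix

noncomputable section

/-- The three Pauli matrices. -/
def pauli : Fin 3 → Matrix (Fin 2) (Fin 2) ℂ
  | 0 => !![0, 1; 1, 0]
  | 1 => !![0, -Complex.I; Complex.I, 0]
  | 2 => !![1, 0; 0, -1]

/-- The Levi-Civita symbol with `ε 0 1 2 = 1`. -/
def eps (i j k : Fin 3) : ℝ :=
  ((j.val : ℝ) - (i.val : ℝ)) * ((k.val : ℝ) - (j.val : ℝ)) * ((k.val : ℝ) - (i.val : ℝ)) / 2

/-- Partial derivative in the direction `x^β` of a real-valued function on `ℝ³`. -/
def pdR (β : Fin 3) (g : (Fin 3 → ℝ) → ℝ) (x : Fin 3 → ℝ) : ℝ :=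
  fderiv ℝ g x (Pi.single β 1)

/-- Partial derivative in the direction `x^β` of a complex-valued function on `ℝ³`. -/
def pdC (β : Fin 3) (g : (Fin 3 → ℝ) → ℂ) (x : Fin 3 → ℝ) : ℂ :=
  fderiv ℝ g x (Pi.single β 1)

/-- Flat Weitzenböck coefficients `Υ[f]^α_{βγ}(x) = Σ_j f_j^α(x) ∂f_j^γ/∂x^β (x)`. -/
def weitz (f : (Fin 3 → ℝ) → Fin 3 → Fin 3 → ℝ) (x : Fin 3 → ℝ) (a b c : Fin 3) : ℝ :=
  ∑ j, f x j a * pdR b (fun y => f y j c) x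

/-- Torsion `T[f]^α_{βγ} = Υ[f]^α_{βγ} − Υ[f]^α_{γβ}`. -/
def weitzTorsion (f : (Fin 3 → ℝ) → Fin 3 → Fin 3 → ℝ) (x : Fin 3 → ℝ) (a b c : Fin 3) : ℝ :=
  weitz f x a b c - weitz f x a c b

/-- Contorsion `K[f]_{αβγ} = (1/2)(T_{αβγ} + T_{βαγ} + T_{γαβ})`. -/
def weitzContorsion (f : (Fin 3 → ℝ) → Fin 3 → Fin 3 → ℝ) (x : Fin 3 → ℝ) (a b c : Fin 3) : ℝ :=
  (weitzTorsion f x a b c + weitzTorsion f x b a c + weitzTorsion f x c a b) / 2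

/-- Hodge dual of the contorsion: `*K[f]_{αβ} = (1/2) Σ_{μν} K[f]_{μαν} ε_{μνβ}`. -/
def weitzDualContorsion (f : (Fin 3 → ℝ) → Fin 3 → Fin 3 → ℝ) (x : Fin 3 → ℝ) (a b : Fin 3) : ℝ :=
  (∑ μ, ∑ ν, weitzContorsion f x μ a ν * eps μ ν b) / 2

theorem pdR_add' (b : Fin 3) {f g : (Fin 3 → ℝ) → ℝ} (hf : Differentiable ℝ f)
    (hg : Differentiable ℝ g) (x : Fin 3 → ℝ) :
    pdR b (fun y => f y + g y) x = pdR b f x + pdR b g x := by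
  unfold pdR
  rw [fderiv_fun_add (hf x) (hg x)]; rfl

theorem pdR_sub' (b : Fin 3) {f g : (Fin 3 → ℝ) → ℝ} (hf : Differentiable ℝ f)
    (hg : Differentiable ℝ g) (x : Fin 3 → ℝ) :
    pdR b (fun y => f y - g y) x = pdR b f x - pdR b g x := by
  unfold pdR
  rw [fderiv_fun_sub (hf x) (hg x)]; rfl

theorem pdR_mul' (b : Fin 3) {f g : (Fin 3 → ℝ) → ℝ} (hf : Differentiable ℝ f)
    (hg : Differentiable ℝ g) (x : Fin 3 → ℝ) :
    pdR b (fun y => f y * g y) x = f x * pdR b g x + g x * pdR b f x := by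
  unfold pdR
  rw [fderiv_fun_mul (hf x) (hg x)]; simp

theorem pdR_const' (b : Fin 3) (c : ℝ) (x : Fin 3 → ℝ) :
    pdR b (fun _ => c) x = 0 := by
  unfold pdR
  simp

theorem pdR_smooth (b : Fin 3) {f : (Fin 3 → ℝ) → ℝ} (hf : ContDiff ℝ (⊤ : ℕ∞) f) :
    Differentiable ℝ (fun x => pdR b f x) := by
  unfold pdR
  have h : ContDiff ℝ 1 (fderiv ℝ f) := (contDiff_infty.1 hf 2).fderiv_right (by norm_num)
  exact (h.differentiable (by norm_num)).clm_apply (differentiable_const _)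

theorem pdR_symm (a b : Fin 3) {f : (Fin 3 → ℝ) → ℝ} (hf : ContDiff ℝ (⊤ : ℕ∞) f)
    (x : Fin 3 → ℝ) :
    pdR a (fun y => pdR b f y) x = pdR b (fun y => pdR a f y) x := by
  have h : ContDiff ℝ 1 (fderiv ℝ f) := (contDiff_infty.1 hf 2).fderiv_right (by norm_num)
  have hd : DifferentiableAt ℝ (fderiv ℝ f) x := (h.differentiable (by norm_num)) x
  have hs : IsSymmSndFDerivAt ℝ f x :=
    (contDiff_infty.1 hf 2).contDiffAt.isSymmSndFDerivAt (by simp)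
  unfold pdR
  rw [fderiv_clm_apply hd (differentiableAt_const _), fderiv_clm_apply hd (differentiableAt_const _)]
  simpa using hs (Pi.single a 1) (Pi.single b 1)

theorem pdC_comb (b : Fin 3) {f g : (Fin 3 → ℝ) → ℝ} (hf : Differentiable ℝ f)
    (hg : Differentiable ℝ g) (x : Fin 3 → ℝ) :
    pdC b (fun y => (f y : ℂ) + Complex.I * (g y : ℂ)) x
      = (pdR b f x : ℂ) + Complex.I * (pdR b g x : ℂ) := by
  unfold pdC pdR
  have h1 : HasFDerivAt (fun y => (f y : ℂ)) (Complex.ofRealCLM.comp (fderiv ℝ f x)) x :=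
    Complex.ofRealCLM.hasFDerivAt.comp x (hf x).hasFDerivAt
  have h2 : HasFDerivAt (fun y => (g y : ℂ)) (Complex.ofRealCLM.comp (fderiv ℝ g x)) x :=
    Complex.ofRealCLM.hasFDerivAt.comp x (hg x).hasFDerivAt
  rw [(h1.fun_add (h2.const_mul Complex.I)).fderiv]
  simp

/-- coefficients of the frame as a quadratic form in the quaternion components -/
def frameQ (w u v z : ℝ) : Fin 3 → Fin 3 → ℝ
  | 0, 0 => w * w + u * u - v * v - z * z
  | 1, 1 => w * w - u * u + v * v - z * z
  | 2, 2 => w * w - u * u - v * v + z * z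
  | 0, 1 => 2 * (u * v) - 2 * (w * z)
  | 1, 0 => 2 * (u * v) + 2 * (w * z)
  | 0, 2 => 2 * (u * z) + 2 * (w * v)
  | 2, 0 => 2 * (u * z) - 2 * (w * v)
  | 1, 2 => 2 * (v * z) - 2 * (w * u)
  | 2, 1 => 2 * (v * z) + 2 * (w * u)

/-- the logarithmic derivative of the quaternion -/
def logD (w u v z dw du dv dz : ℝ) : Fin 3 → ℝ
  | 0 => w * du - u * dw + (dv * z - dz * v)
  | 1 => w * dv - v * dw + (dz * u - du * z)
  | 2 => w * dz - z * dw + (du * v - dv * u)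

theorem weitz_eq (w u v z : (Fin 3 → ℝ) → ℝ) (hw : Differentiable ℝ w)
    (hu : Differentiable ℝ u) (hv : Differentiable ℝ v) (hz : Differentiable ℝ z)
    (hN : ∀ x, w x * w x + u x * u x + v x * v x + z x * z x = 1)
    (x : Fin 3 → ℝ) (b : Fin 3)
    (hd : w x * pdR b w x + u x * pdR b u x + v x * pdR b v x + z x * pdR b z x = 0)
    (a c : Fin 3) :
    weitz (fun y => frameQ (w y) (u y) (v y) (z y)) x a b c
      = -2 * ∑ k, logD (w x) (u x) (v x) (z x) (pdR b w x) (pdR b u x) (pdR b v x) (pdR b z x) k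
          * eps c k a := by
  have h := hN x
  fin_cases a <;> fin_cases c <;>
    simp (disch := fun_prop) [weitz, frameQ, logD, Fin.sum_univ_three, eps, pdR_add', pdR_sub',
      pdR_mul', pdR_const'] <;> grind

theorem dual_eq (w u v z : (Fin 3 → ℝ) → ℝ) (hw : Differentiable ℝ w)
    (hu : Differentiable ℝ u) (hv : Differentiable ℝ v) (hz : Differentiable ℝ z)
    (hN : ∀ x, w x * w x + u x * u x + v x * v x + z x * z x = 1)
    (hd : ∀ b x, w x * pdR b w x + u x * pdR b u x + v x * pdR b v x + z x * pdR b z x = 0)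
    (x : Fin 3 → ℝ) (b k : Fin 3) :
    weitzDualContorsion (fun y => frameQ (w y) (u y) (v y) (z y)) x b k
      = -2 * logD (w x) (u x) (v x) (z x) (pdR b w x) (pdR b u x) (pdR b v x) (pdR b z x) k := by
  simp only [weitzDualContorsion, weitzContorsion, weitzTorsion,
    weitz_eq w u v z hw hu hv hz hN x _ (hd _ x)]
  generalize hL : (fun b => logD (w x) (u x) (v x) (z x)
    (pdR b w x) (pdR b u x) (pdR b v x) (pdR b z x)) = L
  have hL' : ∀ b k, logD (w x) (u x) (v x) (z x)
    (pdR b w x) (pdR b u x) (pdR b v x) (pdR b z x) k = L b k := by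
    intro b k; rw [← hL]
  simp only [hL']
  fin_cases b <;> fin_cases k <;> simp [Fin.sum_univ_three, eps] <;> ring

theorem second_deriv_of_gauge_transformation
    (G : (Fin 3 → ℝ) → Matrix (Fin 2) (Fin 2) ℂ)
    (hG_smooth : ∀ i j : Fin 2, ContDiff ℝ (⊤ : ℕ∞) (fun x => G x i j))
    (hG_unitary : ∀ x : Fin 3 → ℝ, G x * (G x)ᴴ = 1)
    (hG_det : ∀ x : Fin 3 → ℝ, (G x).det = 1)
    (hG_0 : G 0 = 1)
    (e : (Fin 3 → ℝ) → Fin 3 → Fin 3 → ℝ)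
    (he : ∀ x : Fin 3 → ℝ, ∀ j α : Fin 3,
      (e x j α : ℂ) = (2⁻¹ : ℂ) * Matrix.trace (pauli j * (G x)ᴴ * pauli α * G x)) :
    ∀ α β : Fin 3,
      (Matrix.of fun i j : Fin 2 =>
          pdC α (fun x => pdC β (fun y => G y i j) x) 0) =
        (-(Complex.I) / 4) •
            (∑ μ, ((pdR α (fun x => weitzDualContorsion e x β μ) 0 +
                    pdR β (fun x => weitzDualContorsion e x α μ) 0 : ℝ) : ℂ) • pauli μ) -
          (((4⁻¹ : ℝ) * ∑ μ, weitzDualContorsion e 0 α μ * weitzDualContorsion e 0 β μ : ℝ) : ℂ) •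
            (1 : Matrix (Fin 2) (Fin 2) ℂ) := by
  have hadj : ∀ x, (G x)ᴴ = (G x).adjugate := by
    intro x
    calc (G x)ᴴ = ((G x).adjugate * G x) * (G x)ᴴ := by
          rw [Matrix.adjugate_mul, hG_det, one_smul, one_mul]
      _ = (G x).adjugate := by rw [mul_assoc, hG_unitary, mul_one]
  obtain ⟨w, hwdef⟩ : ∃ w : (Fin 3 → ℝ) → ℝ, w = fun x => (G x 0 0).re := ⟨_, rfl⟩
  obtain ⟨z, hzdef⟩ : ∃ w : (Fin 3 → ℝ) → ℝ, w = fun x => (G x 0 0).im := ⟨_, rfl⟩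
  obtain ⟨v, hvdef⟩ : ∃ w : (Fin 3 → ℝ) → ℝ, w = fun x => (G x 0 1).re := ⟨_, rfl⟩
  obtain ⟨u, hudef⟩ : ∃ w : (Fin 3 → ℝ) → ℝ, w = fun x => (G x 0 1).im := ⟨_, rfl⟩
  have sw : ContDiff ℝ (⊤ : ℕ∞) w := hwdef ▸ Complex.reCLM.contDiff.comp (hG_smooth 0 0)
  have sz : ContDiff ℝ (⊤ : ℕ∞) z := hzdef ▸ Complex.imCLM.contDiff.comp (hG_smooth 0 0)
  have sv : ContDiff ℝ (⊤ : ℕ∞) v := hvdef ▸ Complex.reCLM.contDiff.comp (hG_smooth 0 1)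
  have su : ContDiff ℝ (⊤ : ℕ∞) u := hudef ▸ Complex.imCLM.contDiff.comp (hG_smooth 0 1)
  have h00 : ∀ x, G x 0 0 = (w x : ℂ) + Complex.I * (z x : ℂ) := by
    intro x; apply Complex.ext <;> simp [hwdef, hzdef]
  have h01 : ∀ x, G x 0 1 = (v x : ℂ) + Complex.I * (u x : ℂ) := by
    intro x; apply Complex.ext <;> simp [hvdef, hudef]
  have h11 : ∀ x, G x 1 1 = (w x : ℂ) + Complex.I * ((0 - z x : ℝ) : ℂ) := by
    intro x
    have := congrFun (congrFun (hadj x) 0) 0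
    simp [Matrix.adjugate_fin_two] at this
    rw [← this, h00]; apply Complex.ext <;> simp
  have h10 : ∀ x, G x 1 0 = ((0 - v x : ℝ) : ℂ) + Complex.I * (u x : ℂ) := by
    intro x
    have := congrFun (congrFun (hadj x) 1) 0
    simp [Matrix.adjugate_fin_two] at this
    have h2 : G x 1 0 = - (starRingEnd ℂ) (G x 0 1) := by rw [this, neg_neg]
    rw [h2, h01]; apply Complex.ext <;> simp
  have hN : ∀ x, w x * w x + u x * u x + v x * v x + z x * z x = 1 := by
    intro x
    have := hG_det x
    rw [Matrix.det_fin_two, h00, h01, h10, h11] at this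
    have := congrArg Complex.re this
    simp at this
    linarith
  clear hwdef hzdef hvdef hudef
  have dw : Differentiable ℝ w := sw.differentiable (by simp)
  have dz : Differentiable ℝ z := sz.differentiable (by simp)
  have dv : Differentiable ℝ v := sv.differentiable (by simp)
  have du : Differentiable ℝ u := su.differentiable (by simp)
  have hd : ∀ b x, w x * pdR b w x + u x * pdR b u x + v x * pdR b v x + z x * pdR b z x = 0 := by
    intro b x
    have h1 : pdR b (fun x => w x * w x + u x * u x + v x * v x + z x * z x) x = 0 := by
      simp only [hN, pdR_const']
    simp (disch := fun_prop) only [pdR_add', pdR_mul'] at h1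
    linarith
  have hee : e = fun y => frameQ (w y) (u y) (v y) (z y) := by
    funext x j a
    have hGx : G x = !![(w x : ℂ) + Complex.I * (z x : ℂ), (v x : ℂ) + Complex.I * (u x : ℂ);
      ((0 - v x : ℝ) : ℂ) + Complex.I * (u x : ℂ), (w x : ℂ) + Complex.I * ((0 - z x : ℝ) : ℂ)] := by
      ext i j; fin_cases i <;> fin_cases j <;> simp [h00, h01, h10, h11]
    have h := congrArg Complex.re (he x j a)
    rw [hadj, hGx] at h
    rw [Complex.ofReal_re] at h
    rw [h]
    fin_cases j <;> fin_cases a <;>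
      simp [pauli, frameQ, Matrix.adjugate_fin_two, Matrix.trace_fin_two, Matrix.mul_apply,
        Fin.sum_univ_two] <;> ring
  subst hee
  intro α β
  simp only [dual_eq w u v z dw du dv dz hN hd]
  have w0 : w 0 = 1 := by
    have := congrArg Complex.re (h00 0); simpa [hG_0] using this.symm
  have z0 : z 0 = 0 := by
    have := congrArg Complex.im (h00 0); simpa [hG_0] using this.symm
  have v0 : v 0 = 0 := by
    have := congrArg Complex.re (h01 0); simpa [hG_0] using this.symm
  have u0 : u 0 = 0 := by
    have := congrArg Complex.im (h01 0); simpa [hG_0] using this.symm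
  have dw0 : ∀ b, pdR b w 0 = 0 := by
    intro b; simpa [w0, z0, v0, u0] using hd b 0
  have ddw := fun b => pdR_smooth b sw
  have ddz := fun b => pdR_smooth b sz
  have ddv := fun b => pdR_smooth b sv
  have ddu := fun b => pdR_smooth b su
  have hdd : pdR α (fun x => pdR β w x) 0 =
      -(pdR α u 0 * pdR β u 0 + pdR α v 0 * pdR β v 0 + pdR α z 0 * pdR β z 0) := by
    have h1 : pdR α (fun x => w x * pdR β w x + u x * pdR β u x + v x * pdR β v x
        + z x * pdR β z x) 0 = 0 := by
      simp only [hd, pdR_const']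
    simp (disch := fun_prop) only [pdR_add', pdR_mul', w0, z0, v0, u0, dw0] at h1
    linarith
  have hB : ∀ a b k, pdR a (fun x => -2 * logD (w x) (u x) (v x) (z x) (pdR b w x) (pdR b u x)
      (pdR b v x) (pdR b z x) k) 0 = -2 * logD 1 0 0 0 0 (pdR a (fun x => pdR b u x) 0)
        (pdR a (fun x => pdR b v x) 0) (pdR a (fun x => pdR b z x) 0) k
      -2 * logD 0 (pdR a u 0) (pdR a v 0) (pdR a z 0) 0 (pdR b u 0) (pdR b v 0) (pdR b z 0) k := by
    intro a b k
    fin_cases k <;> simp (disch := fun_prop) only [logD, pdR_add', pdR_sub', pdR_mul', pdR_const',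
      w0, z0, v0, u0, dw0] <;> ring
  simp only [hB, w0, z0, v0, u0, dw0]
  rw [pdR_symm β α su, pdR_symm β α sv, pdR_symm β α sz]
  have dz' : Differentiable ℝ (fun x => 0 - z x) := by fun_prop
  have dv' : Differentiable ℝ (fun x => 0 - v x) := by fun_prop
  have ez : ∀ b x, pdR b (fun x => 0 - z x) x = 0 - pdR b z x := by
    intro b x; rw [pdR_sub' b (by fun_prop) dz, pdR_const']
  have ev : ∀ b x, pdR b (fun x => 0 - v x) x = 0 - pdR b v x := by
    intro b x; rw [pdR_sub' b (by fun_prop) dv, pdR_const']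
  have ez2 : pdR α (fun x => 0 - pdR β z x) 0 = - pdR α (fun x => pdR β z x) 0 := by
    rw [pdR_sub' α (by fun_prop) (ddz β), pdR_const', zero_sub]
  have ev2 : pdR α (fun x => 0 - pdR β v x) 0 = - pdR α (fun x => pdR β v x) 0 := by
    rw [pdR_sub' α (by fun_prop) (ddv β), pdR_const', zero_sub]
  have dz2 : Differentiable ℝ (fun x => 0 - pdR β z x) := by fun_prop
  have dv2 : Differentiable ℝ (fun x => 0 - pdR β v x) := by fun_prop
  have H00 : pdC α (fun x => pdC β (fun y => G y 0 0) x) 0 =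
      (pdR α (fun x => pdR β w x) 0 : ℂ) + Complex.I * (pdR α (fun x => pdR β z x) 0 : ℂ) := by
    simp only [h00, pdC_comb β dw dz]
    exact pdC_comb α (ddw β) (ddz β) 0
  have H01 : pdC α (fun x => pdC β (fun y => G y 0 1) x) 0 =
      (pdR α (fun x => pdR β v x) 0 : ℂ) + Complex.I * (pdR α (fun x => pdR β u x) 0 : ℂ) := by
    simp only [h01, pdC_comb β dv du]
    exact pdC_comb α (ddv β) (ddu β) 0
  have H10 : pdC α (fun x => pdC β (fun y => G y 1 0) x) 0 =
      ((- pdR α (fun x => pdR β v x) 0 : ℝ) : ℂ)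
        + Complex.I * (pdR α (fun x => pdR β u x) 0 : ℂ) := by
    simp only [h10, pdC_comb β dv' du, ev]
    rw [← ev2]
    exact pdC_comb α dv2 (ddu β) 0
  have H11 : pdC α (fun x => pdC β (fun y => G y 1 1) x) 0 =
      (pdR α (fun x => pdR β w x) 0 : ℂ)
        + Complex.I * ((- pdR α (fun x => pdR β z x) 0 : ℝ) : ℂ) := by
    simp only [h11, pdC_comb β dw dz', ez]
    rw [← ez2]
    exact pdC_comb α (ddw β) dz2 0
  ext i j
  fin_cases i <;> fin_cases j <;>
    simp [H00, H01, H10, H11, hdd, Fin.sum_univ_three, pauli, logD] <;>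
    apply Complex.ext <;> simp <;> ring
end
end

section
/- Let μ̂ : ℝ → ℂ be smooth and compactly supported with support contained in (−2π, 2π) and with μ̂ = 1 on some neighbourhood of 0, and let μ(λ) := (1/2π)·∫_ℝ e^{itλ}·μ̂(t) dt. Then for every α > 0 there exists C > 0 such that for all λ ≥ 1: | Σ_{k=1}^∞ k(k+1)·μ(λ − k − 1/2) − (λ² − 1/4) | ≤ C·λ^{−α}; that is, Σ_{k=1}^∞ k(k+1)·μ(λ − k − 1/2) = λ² − 1/4 + O(λ^{−∞}) as λ → +∞. -/
open Real MeasureTheory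

noncomputable section

open scoped SchwartzMap FourierTransform LineDeriv

/-- Normalised derivative on Schwartz functions: conjugate to multiplication by `x`. -/
def DD (f : 𝓢(ℝ, ℂ)) : 𝓢(ℝ, ℂ) := (Complex.I / (2 * π)) • (∂_{(1:ℝ)} f : 𝓢(ℝ, ℂ))

lemma finv_DD (f : 𝓢(ℝ, ℂ)) (x : ℝ) : (𝓕⁻ (DD f)) x = (x : ℂ) * (𝓕⁻ f) x := by
  have ht : (fun y : ℝ => inner ℝ y (1:ℝ)).HasTemperateGrowth := by fun_prop
  have hpi : (π : ℂ) ≠ 0 := by exact_mod_cast Real.pi_ne_zero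
  rw [DD, FourierTransform.fourierInv_smul, SchwartzMap.fourierInv_lineDerivOp_eq]
  rw [smul_apply, smul_apply, SchwartzMap.smulLeftCLM_apply_apply ht]
  simp only [smul_eq_mul, Complex.real_smul]
  simp only [inner, RCLike.re_to_real, conj_trivial, one_mul]
  field_simp
  ring_nf
  simp [Complex.I_sq, mul_comm]

lemma DD_eq_zero_of_eventually (f : 𝓢(ℝ, ℂ)) (x : ℝ) (c : ℂ) (h : ∀ᶠ t in nhds x, f t = c) :
    ∀ᶠ t in nhds x, DD f t = 0 := by
  filter_upwards [h.eventually_nhds] with t ht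
  have : fderiv ℝ f t = 0 := by
    have h2 : (f : ℝ → ℂ) =ᶠ[nhds t] fun _ => c := ht
    rw [h2.fderiv_eq]; simp
  rw [DD, smul_apply, SchwartzMap.lineDerivOp_apply_eq_fderiv, this]
  simp

lemma poisson_finv (G : 𝓢(ℝ, ℂ)) (h0 : ∀ n : ℤ, n ≠ 0 → G n = 0) (x : ℝ) :
    HasSum (fun n : ℤ => (𝓕⁻ G) (x - n)) (G 0) := by
  have hsum : Summable (fun n : ℤ => (𝓕⁻ G) (x + n)) := by
    have h1 := SchwartzMap.isBigO_cocompact_rpow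
      (SchwartzMap.compSubConstCLM ℂ (-x) (𝓕⁻ G)) (-2)
    have := summable_of_isBigO (Real.summable_abs_int_rpow one_lt_two)
      (h1.comp_tendsto Int.tendsto_coe_cofinite)
    refine this.congr fun n => ?_
    simp [SchwartzMap.compSubConstCLM, add_comm]
  have h := SchwartzMap.tsum_eq_tsum_fourier (𝓕⁻ G) x
  rw [FourierTransform.fourier_fourierInv_eq,
    tsum_eq_single (f := fun n : ℤ => G n * fourier n (x : UnitAddCircle)) 0] at h
  · have h3 := hsum.hasSum
    rw [h] at h3
    have h4 := (Equiv.neg ℤ).hasSum_iff.mpr h3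
    simpa [Function.comp_def, sub_eq_add_neg] using h4
  · intro n hn
    rw [h0 n hn, zero_mul]

lemma tail_bound (f : 𝓢(ℝ, ℂ)) (α : ℝ) :
    ∃ C : ℝ, 0 < C ∧ ∀ lam : ℝ, 1 ≤ lam →
      ‖∑' m : ℕ, ((m : ℂ) * (m - 1)) * f (lam + m - 1 / 2)‖ ≤ C * lam ^ (-α) := by
  obtain ⟨A, hA⟩ := exists_nat_ge α
  obtain ⟨C, hC, hf⟩ := f.decay (A + 4) 0
  have hs : Summable (fun m : ℕ => (((m : ℝ) + 1) ^ 2)⁻¹) := by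
    have := (summable_nat_add_iff 1).mpr (Real.summable_nat_pow_inv.mpr (one_lt_two))
    simpa using this
  set S := ∑' m : ℕ, (((m : ℝ) + 1) ^ 2)⁻¹ with hS
  have hS0 : 0 ≤ S := tsum_nonneg fun m => by positivity
  refine ⟨C * 2 ^ A * 4 * (S + 1), by positivity, fun lam hl => ?_⟩
  have hterm : ∀ m : ℕ, ‖((m : ℂ) * (m - 1)) * f (lam + m - 1 / 2)‖ ≤
      (C * 2 ^ A * 4 * (lam ^ A)⁻¹) * (((m : ℝ) + 1) ^ 2)⁻¹ := by
    intro m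
    have hm : (0:ℝ) ≤ m := m.cast_nonneg
    set y := lam + m - 1 / 2 with hy
    have hy0 : 0 < y := by linarith
    have h1 := hf y
    rw [norm_iteratedFDeriv_zero, Real.norm_eq_abs, abs_of_pos hy0] at h1
    have h2 : ‖(m : ℂ) * (m - 1)‖ ≤ y ^ 2 := by
      have : (m : ℂ) * (m - 1) = (((m : ℝ) * (m - 1) : ℝ) : ℂ) := by push_cast; ring
      rw [this, Complex.norm_real, Real.norm_eq_abs, abs_le]
      constructor <;> nlinarith
    have h3 : lam ^ A ≤ (2 * y) ^ A := by gcongr; linarith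
    have h4 : ((m : ℝ) + 1) ^ 2 ≤ (2 * y) ^ 2 := by gcongr; linarith
    rw [norm_mul, ← div_eq_mul_inv, ← div_eq_mul_inv, div_div, le_div_iff₀ (by positivity)]
    calc _ ≤ y ^ 2 * ‖f y‖ * ((2 * y) ^ A * (2 * y) ^ 2) := by gcongr
      _ = (2 ^ A * 4) * (y ^ (A + 4) * ‖f y‖) := by ring
      _ ≤ (2 ^ A * 4) * C := by gcongr
      _ = _ := by ring
  have hb := tsum_of_norm_bounded (hs.hasSum.mul_left _) hterm
  refine hb.trans ?_
  have h5 : (lam ^ A)⁻¹ ≤ lam ^ (-α) := by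
    rw [← Real.rpow_natCast, ← Real.rpow_neg (by linarith)]
    exact Real.rpow_le_rpow_of_exponent_le hl (by linarith)
  have h6 : 0 ≤ lam ^ (-α) := Real.rpow_nonneg (by linarith) _
  calc _ ≤ C * 2 ^ A * 4 * lam ^ (-α) * (S + 1) := by
        gcongr; linarith
    _ = _ := by ring

lemma split_int (F : ℤ → ℂ) (a : ℂ) (hF : HasSum F a) :
    a = (∑' n : ℕ, F (n : ℤ)) + ∑' n : ℕ, F (-((n : ℤ) + 1)) := by
  have hs1 : Summable (fun n : ℕ => F (n : ℤ)) :=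
    hF.summable.comp_injective (i := fun n : ℕ => (n : ℤ)) Nat.cast_injective
  have hs2 : Summable (fun n : ℕ => F (-((n : ℤ) + 1))) :=
    hF.summable.comp_injective (i := fun n : ℕ => (-((n : ℤ) + 1)))
      (fun a b hab => by simpa using hab)
  rw [← hF.tsum_eq]
  exact tsum_of_nat_of_neg_add_one hs1 hs2

theorem dirac_sphere_mollified_counting
    (muhat : ℝ → ℂ)
    (h_smooth : ContDiff ℝ (⊤ : ℕ∞) muhat)
    (h_compact : HasCompactSupport muhat)
    (h_supp : tsupport muhat ⊆ Set.Ioo (-(2 * π)) (2 * π))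
    (h_one : ∀ᶠ t in nhds (0 : ℝ), muhat t = 1)
    (mu : ℝ → ℂ)
    (hmu : ∀ lam : ℝ, mu lam =
      (1 / (2 * π) : ℝ) * ∫ t : ℝ, Complex.exp (Complex.I * t * lam) * muhat t) :
    ∀ α : ℝ, 0 < α → ∃ C : ℝ, 0 < C ∧ ∀ lam : ℝ, 1 ≤ lam →
      ‖(∑' k : ℕ, (((k : ℂ) + 1) * ((k : ℂ) + 2)) * mu (lam - ((k : ℝ) + 1) - 1 / 2)) -
          ((lam : ℂ) ^ 2 - 1 / 4)‖ ≤ C * lam ^ (-α) := by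
  have h2pi : 0 < 2 * π := by positivity
  have hcs : HasCompactSupport (fun s : ℝ => muhat (2 * π * s)) :=
    h_compact.comp_homeomorph (Homeomorph.mulLeft₀ (2 * π) h2pi.ne')
  have hsm : ContDiff ℝ (⊤ : ℕ∞) (fun s : ℝ => muhat (2 * π * s)) :=
    h_smooth.comp (contDiff_const.mul contDiff_id)
  obtain ⟨h, hh⟩ : ∃ h : 𝓢(ℝ, ℂ), ∀ s, h s = muhat (2 * π * s) :=
    ⟨hcs.toSchwartzMap hsm, fun s => rfl⟩
  have htend : ∀ s : ℝ, Filter.Tendsto (fun t : ℝ => 2 * π * t) (nhds s) (nhds (2 * π * s)) :=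
    fun s => (continuous_const.mul continuous_id).tendsto s
  have hone : ∀ᶠ t in nhds (0:ℝ), h t = 1 := by
    have := htend 0
    rw [mul_zero] at this
    simp only [hh]
    exact this.eventually h_one
  have hzero : ∀ n : ℤ, n ≠ 0 → ∀ᶠ t in nhds (n:ℝ), h t = 0 := by
    intro n hn
    have hnot : 2 * π * (n:ℝ) ∉ tsupport muhat := by
      intro hmem
      obtain ⟨ha, hb⟩ := h_supp hmem
      have h1 : (-1 : ℝ) < n := by nlinarith
      have h2 : (n : ℝ) < 1 := by nlinarith
      have h1' : -1 < n := by exact_mod_cast h1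
      have h2' : n < 1 := by exact_mod_cast h2
      omega
    have := notMem_tsupport_iff_eventuallyEq.mp hnot
    simp only [hh]
    exact (htend n).eventually this
  have hmuh : ∀ x, mu x = (𝓕⁻ h) x := by
    intro x
    rw [hmu, SchwartzMap.fourierInv_coe, Real.fourierInv_eq']
    have := Measure.integral_comp_mul_left
      (fun t : ℝ => Complex.exp (Complex.I * t * x) * muhat t) (2 * π)
    rw [abs_of_pos (by positivity), Complex.real_smul] at this
    rw [one_div, ← this]
    congr 1
    ext s
    rw [hh, smul_eq_mul]
    congr 2
    simp [inner]
    ring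
  intro α _
  obtain ⟨C, hC, hbound⟩ := tail_bound (𝓕⁻ h) α
  refine ⟨C, hC, fun lam hl => ?_⟩
  have hlb := hbound lam hl
  obtain ⟨G, hG⟩ : ∃ G : 𝓢(ℝ, ℂ), G = ((lam : ℂ) ^ 2 - 1 / 4) • h + ((-2 * lam : ℂ) • DD h + DD (DD h)) := ⟨_, rfl⟩
  have hG0 : G 0 = (lam : ℂ) ^ 2 - 1 / 4 := by
    have e1 := DD_eq_zero_of_eventually h 0 1 hone
    have e2 := DD_eq_zero_of_eventually (DD h) 0 0 e1
    simp [hG, hone.self_of_nhds, e1.self_of_nhds, e2.self_of_nhds]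
  have hGn : ∀ n : ℤ, n ≠ 0 → G n = 0 := by
    intro n hn
    have e0 := hzero n hn
    have e1 := DD_eq_zero_of_eventually h n 0 e0
    have e2 := DD_eq_zero_of_eventually (DD h) n 0 e1
    simp [hG, e0.self_of_nhds, e1.self_of_nhds, e2.self_of_nhds]
  have hGx : ∀ x : ℝ, (𝓕⁻ G) x = ((lam - x : ℂ) ^ 2 - 1 / 4) * (𝓕⁻ h) x := by
    intro x
    simp only [hG, FourierTransform.fourierInv_add, FourierTransform.fourierInv_smul,
      add_apply, smul_apply, finv_DD, smul_eq_mul]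
    ring
  have hP := poisson_finv G hGn (lam - 3 / 2)
  rw [hG0] at hP
  have hsplit := split_int _ _ hP
  have e1 : ∑' n : ℕ, (𝓕⁻ G) (lam - 3 / 2 - ((n : ℤ) : ℝ)) =
      ∑' k : ℕ, (((k : ℂ) + 1) * ((k : ℂ) + 2)) * mu (lam - ((k : ℝ) + 1) - 1 / 2) := by
    refine tsum_congr fun k => ?_
    rw [hmuh, hGx]
    congr 1
    · push_cast; ring
    · congr 1; push_cast; ring
  have e2 : ∑' n : ℕ, (𝓕⁻ G) (lam - 3 / 2 - ((-((n : ℤ) + 1) : ℤ) : ℝ)) =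
      ∑' m : ℕ, ((m : ℂ) * (m - 1)) * (𝓕⁻ h) (lam + m - 1 / 2) := by
    refine tsum_congr fun k => ?_
    rw [hGx]
    congr 1
    · push_cast; ring
    · congr 1; push_cast; ring
  rw [e1, e2] at hsplit
  rw [hsplit, sub_add_cancel_left, norm_neg]
  exact hlb
end
end

section
/- On ℝ³ with coordinates x = (u,v,w), let f² := (u² + v² + w²)/4, let g_{αβ}(x) := (1 + f²)^{−2}·δ_{αβ} be the stereographic round metric, and let e_{±,j} := V_{±,j} be the frames V_{±,1} = (1/2)(2 − 2f² + u², uv ∓ 2w, uw ± 2v), V_{±,2} = (1/2)(uv ± 2w, 2 − 2f² + v², vw ∓ 2u), V_{±,3} = (1/2)(uw ∓ 2v, vw ± 2u, 2 − 2f² + w²). Define the Christoffel symbols Γ^α_{βγ} := (1/2)·g^{αρ}(∂_β g_{ργ} + ∂_γ g_{ρβ} − ∂_ρ g_{βγ}), the Weitzenböck coefficients Υ^α_{βγ} := Σ_j e_{±,j}^α · ∂_β( δ^{jk} g_{γδ} e_{±,k}^δ ), the contorsion K^α{}_{βγ} := Υ^α_{βγ} − Γ^α_{βγ}, the Riemannian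 density ρ := √(det g) = (1 + f²)^{−3}, and the dual *K_{αβ} := (1/2)·K^μ{}_α{}^ν · ρ·ε_{μνβ}, where K^μ{}_α{}^ν := K^μ{}_{αγ}·g^{γν} and ε is the totally antisymmetric symbol with ε₁₂₃ = 1. Then for all x ∈ ℝ³ and all α, β: *K_{αβ}(x) = ∓ g_{αβ}(x) (minus sign for the framing V_{+}, plus sign for V_{−}). -/
noncomputable section

/-- `f² = (u² + v² + w²)/4` in stereographic coordinates `x = (u,v,w)`. -/
def fsq (x : Fin 3 → ℝ) : ℝ := (∑ i, x i ^ 2) / 4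

/-- The stereographic round metric `g_{αβ} = (1 + f²)^{-2} δ_{αβ}` of the unit 3-sphere. -/
def gmet (x : Fin 3 → ℝ) (a b : Fin 3) : ℝ :=
  ((1 + fsq x) ^ 2)⁻¹ * (if a = b then 1 else 0)

/-- The inverse metric `g^{αβ} = (1 + f²)^2 δ^{αβ}`. -/
def ginv (x : Fin 3 → ℝ) (a b : Fin 3) : ℝ :=
  (1 + fsq x) ^ 2 * (if a = b then 1 else 0)

/-- Christoffel symbols `Γ^α_{βγ} = (1/2) g^{αρ} (∂_β g_{ργ} + ∂_γ g_{ρβ} − ∂_ρ g_{βγ})`. -/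
def christoffel (x : Fin 3 → ℝ) (a b c : Fin 3) : ℝ :=
  (2⁻¹ : ℝ) * ∑ r, ginv x a r *
    (pdR b (fun y => gmet y r c) x + pdR c (fun y => gmet y r b) x -
      pdR r (fun y => gmet y b c) x)

/-- The framings `V_{±,j}` of the round 3-sphere in stereographic coordinates;
`s = 1` gives `V_+`, `s = -1` gives `V_-`.  `frameS s x j α` is the `α`-th component
of the `j`-th frame vector at the point `x`. -/
def frameS (s : ℝ) (x : Fin 3 → ℝ) (j α : Fin 3) : ℝ :=
  (2⁻¹ : ℝ) *
    !![2 - 2 * fsq x + x 0 ^ 2, x 0 * x 1 - 2 * s * x 2, x 0 * x 2 + 2 * s * x 1;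
       x 0 * x 1 + 2 * s * x 2, 2 - 2 * fsq x + x 1 ^ 2, x 1 * x 2 - 2 * s * x 0;
       x 0 * x 2 - 2 * s * x 1, x 1 * x 2 + 2 * s * x 0, 2 - 2 * fsq x + x 2 ^ 2] j α

/-- Weitzenböck coefficients `Υ^α_{βγ} = Σ_j e_j^α ∂_β (δ^{jk} g_{γδ} e_k^δ)`. -/
def upsilon (s : ℝ) (x : Fin 3 → ℝ) (a b c : Fin 3) : ℝ :=
  ∑ j, frameS s x j a * pdR b (fun y => ∑ d, gmet y c d * frameS s y j d) x

/-- Contorsion `K^α_{βγ} = Υ^α_{βγ} − Γ^α_{βγ}`. -/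
def contorK (s : ℝ) (x : Fin 3 → ℝ) (a b c : Fin 3) : ℝ :=
  upsilon s x a b c - christoffel x a b c

/-- The Riemannian density `ρ = √(det g) = (1 + f²)^{-3}`. -/
def dens (x : Fin 3 → ℝ) : ℝ := ((1 + fsq x) ^ 3)⁻¹

/-- Hodge dual of the contorsion in its first and third indices,
`*K_{αβ} = (1/2) K^μ{}_α{}^ν ρ ε_{μνβ}` with `K^μ{}_α{}^ν = K^μ{}_{αγ} g^{γν}`. -/
def dualContorK (s : ℝ) (x : Fin 3 → ℝ) (a b : Fin 3) : ℝ :=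
  (2⁻¹ : ℝ) * ∑ μ, ∑ ν, (∑ γ, contorK s x μ a γ * ginv x γ ν) * dens x * eps μ ν b

theorem fsq_hasFDerivAt (x : Fin 3 → ℝ) :
    HasFDerivAt fsq
      ((x 0 / 2) • ContinuousLinearMap.proj (R := ℝ) (φ := fun _ : Fin 3 => ℝ) 0
        + (x 1 / 2) • ContinuousLinearMap.proj (R := ℝ) (φ := fun _ : Fin 3 => ℝ) 1
        + (x 2 / 2) • ContinuousLinearMap.proj (R := ℝ) (φ := fun _ : Fin 3 => ℝ) 2) x := by
  have h : ∀ i : Fin 3, HasFDerivAt (fun y : Fin 3 → ℝ => y i)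
      (ContinuousLinearMap.proj (R := ℝ) (φ := fun _ : Fin 3 => ℝ) i) x :=
    fun i => hasFDerivAt_apply i x
  have e : fsq = fun y : Fin 3 → ℝ => (y 0 * y 0 + y 1 * y 1 + y 2 * y 2) * (1 / 4) := by
    funext y
    simp only [fsq, Fin.sum_univ_three]
    ring
  rw [e]
  refine (((((h 0).mul (h 0)).add ((h 1).mul (h 1))).add
    ((h 2).mul (h 2))).mul_const (1 / 4)).congr_fderiv ?_
  ext v
  simp
  ring

theorem one_add_fsq_pos (x : Fin 3 → ℝ) : 0 < 1 + fsq x := by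
  have : 0 ≤ fsq x := by unfold fsq; positivity
  linarith

theorem fsq_differentiableAt (x : Fin 3 → ℝ) : DifferentiableAt ℝ fsq x :=
  (fsq_hasFDerivAt x).differentiableAt

theorem pdR_fsq (b : Fin 3) (x : Fin 3 → ℝ) : pdR b fsq x = x b / 2 := by
  unfold pdR
  rw [(fsq_hasFDerivAt x).fderiv]
  fin_cases b <;> simp

/-- The conformal factor. -/
def cfac (x : Fin 3 → ℝ) : ℝ := ((1 + fsq x) ^ 2)⁻¹

theorem cfac_hasFDerivAt (x : Fin 3 → ℝ) :
    HasFDerivAt cfac ((-2 * ((1 + fsq x) ^ 3)⁻¹) • fderiv ℝ fsq x) x := by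
  have hF := (one_add_fsq_pos x).ne'
  have h1 : HasDerivAt (fun t : ℝ => ((1 + t) ^ 2)⁻¹) (-2 * ((1 + fsq x) ^ 3)⁻¹) (fsq x) := by
    have h2 := (((hasDerivAt_id (fsq x)).const_add 1).pow 2).inv (pow_ne_zero 2 hF)
    refine h2.congr_deriv ?_
    simp
    field_simp
  exact h1.comp_hasFDerivAt x (fsq_differentiableAt x).hasFDerivAt

theorem pdR_cfac (b : Fin 3) (x : Fin 3 → ℝ) :
    pdR b cfac x = -x b * ((1 + fsq x) ^ 3)⁻¹ := by
  have h := pdR_fsq b x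
  unfold pdR at h ⊢
  rw [(cfac_hasFDerivAt x).fderiv]
  simp only [smul_apply, h, smul_eq_mul]
  ring

theorem pdR_gmet (b c d : Fin 3) (x : Fin 3 → ℝ) :
    pdR b (fun y => gmet y c d) x
      = -x b * ((1 + fsq x) ^ 3)⁻¹ * (if c = d then 1 else 0) := by
  have h := pdR_cfac b x
  unfold pdR at h ⊢
  have e : (fun y => gmet y c d) = fun y => cfac y * (if c = d then (1 : ℝ) else 0) := rfl
  rw [e, ((cfac_hasFDerivAt x).differentiableAt.hasFDerivAt.mul_const _).fderiv]
  simp only [smul_apply, h, smul_eq_mul]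
  ring

theorem frameS_eq (s : ℝ) (x : Fin 3 → ℝ) (j c : Fin 3) :
    frameS s x j c = (1 - fsq x) * (if j = c then 1 else 0) + 2⁻¹ * (x j * x c)
      - s * (eps j c 0 * x 0 + eps j c 1 * x 1 + eps j c 2 * x 2) := by
  fin_cases j <;> fin_cases c <;> simp [frameS, eps] <;> ring

theorem frameS_hasFDerivAt (s : ℝ) (x : Fin 3 → ℝ) (j c : Fin 3) :
    ∃ L : (Fin 3 → ℝ) →L[ℝ] ℝ, HasFDerivAt (fun y => frameS s y j c) L x ∧
      ∀ b, L (Pi.single b 1) = -(x b / 2) * (if j = c then 1 else 0)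
        + 2⁻¹ * (x j * (if b = c then 1 else 0) + x c * (if b = j then 1 else 0))
        - s * eps j c b := by
  have h : ∀ i : Fin 3, HasFDerivAt (fun y : Fin 3 → ℝ => y i)
      (ContinuousLinearMap.proj (R := ℝ) (φ := fun _ : Fin 3 => ℝ) i) x :=
    fun i => hasFDerivAt_apply i x
  have e : (fun y => frameS s y j c) = _ := funext fun y => frameS_eq s y j c
  rw [e]
  refine ⟨_, (((((fsq_differentiableAt x).hasFDerivAt.const_sub 1).mul_const _).add
    (((h j).mul (h c)).const_mul _)).sub
    (((((h 0).const_mul _).add ((h 1).const_mul _)).add ((h 2).const_mul _)).const_mul s)), ?_⟩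
  intro b
  have hf := pdR_fsq b x
  unfold pdR at hf
  simp only [sub_apply, add_apply,
    smul_apply, neg_apply, hf, smul_eq_mul,
    ContinuousLinearMap.proj_apply, Pi.single_apply]
  simp only [eq_comm (b := b)]
  congr 1
  · ring
  · fin_cases b <;> simp

theorem pdR_coframe (s : ℝ) (x : Fin 3 → ℝ) (j b c : Fin 3) :
    pdR b (fun y => ∑ d, gmet y c d * frameS s y j d) x
      = -x b * ((1 + fsq x) ^ 3)⁻¹ * frameS s x j c + ((1 + fsq x) ^ 2)⁻¹ *
       (-(x b / 2) * (if j = c then 1 else 0)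
        + 2⁻¹ * (x j * (if b = c then 1 else 0) + x c * (if b = j then 1 else 0))
        - s * eps j c b) := by
  obtain ⟨L, hL, hb⟩ := frameS_hasFDerivAt s x j c
  have e : (fun y => ∑ d, gmet y c d * frameS s y j d) = fun y => cfac y * frameS s y j c := by
    funext y
    simp [gmet, cfac]
  have h := pdR_cfac b x
  unfold pdR at h ⊢
  have hm : HasFDerivAt (fun y => cfac y * frameS s y j c) _ x :=
    (cfac_hasFDerivAt x).differentiableAt.hasFDerivAt.mul hL
  rw [e, hm.fderiv]
  simp only [add_apply, smul_apply, h, hb, smul_eq_mul]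
  simp only [cfac]
  ring

set_option maxHeartbeats 4000000 in
theorem einstein_aux
    (s : ℝ) (hs : s = 1 ∨ s = -1) (x : Fin 3 → ℝ) (a b : Fin 3) :
    dualContorK s x a b = -s * gmet x a b := by
  have hF := (one_add_fsq_pos x).ne'
  have hq : fsq x = (x 0 ^ 2 + x 1 ^ 2 + x 2 ^ 2) / 4 := by
    simp only [fsq, Fin.sum_univ_three]
  simp only [dualContorK, contorK, upsilon, christoffel, pdR_coframe, pdR_gmet]
  simp only [frameS_eq, gmet, ginv, dens, Fin.sum_univ_three]
  have hfs : fsq x = (1 + fsq x) - 1 := by ring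
  have hq' : 1 + fsq x = 1 + (x 0 ^ 2 + x 1 ^ 2 + x 2 ^ 2) / 4 := by rw [hq]
  clear hq
  generalize 1 + fsq x = F at *
  rw [hfs]
  clear hfs
  rcases hs with rfl | rfl <;> fin_cases a <;> fin_cases b <;> simp [eps] <;> field_simp <;>
    rw [hq'] <;> ring


/-- The Einstein property of the two standard framings of the round 3-sphere:
`*K_{αβ} = ∓ g_{αβ}` (minus sign for the framing `V_+`, plus sign for `V_-`). -/
theorem sphere_framing_einstein_property
    (s : ℝ) (hs : s = 1 ∨ s = -1) (x : Fin 3 → ℝ) (a b : Fin 3) :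
    dualContorK s x a b = -s * gmet x a b := by
  exact einstein_aux s hs x a b
end
end
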